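/- Fix an integer n ≥ 2 and a prime ℓ. Suppose that for every ε > 0 there exists a constant C such that for every integer D ≥ 1 the number of degree-(nℓ) fields L with D_L = D is at most C·D^{ε}. Then for every ε > 0 there exists a constant C' such that every degree-n field K satisfies |Cl_K[ℓ]| ≤ C' · D_K^{ε}. -/

import Mathlib

open NumberField Filter

-- The absolute value of the discriminant of an intermediate field `K` of `ℚ̄/ℚ`
-- (junk value `0` in the irrelevant case that `K/ℚ` is infinite-dimensional).
open scoped Classical in
noncomputable def absDisc (K : IntermediateField ℚ (AlgebraicClosure ℚ)) : ℕ :=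
  if h : FiniteDimensional ℚ K then
    letI : NumberField K := { to_charZero := inferInstance, to_finiteDimensional := h }
    (NumberField.discr K).natAbs
  else 0

/-- The cardinality `|Cl_K[m]|` of the `m`-torsion subgroup of the class group of `K`. -/
noncomputable def clTors (K : IntermediateField ℚ (AlgebraicClosure ℚ)) (m : ℕ) : ℕ :=
  Nat.card {x : ClassGroup (𝓞 K) // x ^ m = 1}

/-!
A nontrivial class `x ∈ Cl_K[ℓ]` contains an integral ideal `I` with `I ^ ℓ = (a)`, and
`L = K(a^{1/ℓ})` has degree `ℓ` over `K`. Since `I` becomes principal in `L`, locally `L/K` is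
generated by an `ℓ`-th root of an element of `K` that can be scaled to be a unit. Hence `ℓ` lies in
the different of `L/K`, and `D_L = m * D_K ^ ℓ` with `1 ≤ m ≤ ℓ ^ (nℓ)`. By Kummer theory, two
classes producing the same field `L` generate the same subgroup, so each `L` arises from at most `ℓ`
classes. The hypothesis with exponent `ε / ℓ` then bounds the number of fields `L` by
`O(D_K ^ ε)` for each of the boundedly many values of `m`.
-/

open Polynomial IntermediateField nonZeroDivisors

section RadicalExtension

variable {K L : Type*} [Field K] [Field L] [Algebra K L] {p : ℕ} {θ η : L}

theorem finrank_adjoin_simple_of_pow_eq_algebraMap (hp : p.Prime) {a : K} (ha : ∀ b : K, b ^ p ≠ a)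
    (hθ : θ ^ p = algebraMap K L a) : Module.finrank K K⟮θ⟯ = p := by
  have hmin : X ^ p - C a = minpoly K θ :=
    minpoly.eq_of_irreducible_of_monic (X_pow_sub_C_irreducible_of_prime hp ha) (by simp [hθ])
      (monic_X_pow_sub_C a hp.ne_zero)
  have hint : IsIntegral K θ := .of_pow hp.pos (hθ ▸ isIntegral_algebraMap)
  rw [adjoin.finrank hint, ← hmin, natDegree_X_pow_sub_C]

theorem exists_eq_algebraMap_mul_pow_of_finrank_prime [Algebra.IsSeparable K L] (hp : p.Prime)
    (hKL : Module.finrank K L = p)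
    (hθ : θ ∉ Set.range (algebraMap K L)) (hθp : θ ^ p ∈ Set.range (algebraMap K L))
    (hη : η ≠ 0) (hηp : η ^ p ∈ Set.range (algebraMap K L)) :
    ∃ j < p, ∃ c : K, η = algebraMap K L c * θ ^ j := by
  have : FiniteDimensional K L := Module.finite_of_finrank_pos (hKL ▸ hp.pos)
  obtain ⟨f, g, hfg⟩ : ∃ f g : L →ₐ[K] AlgebraicClosure K, f ≠ g := by
    rw [← Fintype.one_lt_card_iff, AlgHom.card, hKL]
    exact hp.one_lt
  have := Subalgebra.isSimpleOrder_of_finrank_prime K L (hKL ▸ hp)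
  -- As `p` is prime there is no field strictly between `K` and `L`: `f` and `g` agree only on `K`.
  have hbot : AlgHom.equalizer f g = ⊥ := (eq_bot_or_eq_top _).resolve_right fun htop =>
    hfg (AlgHom.ext fun x => htop.ge (Algebra.mem_top : x ∈ ⊤))
  have eq_iff (x : L) : f x = g x ↔ x ∈ Set.range (algebraMap K L) := by
    rw [← AlgHom.mem_equalizer, hbot, Algebra.mem_bot]
  have div_pow_eq_one {x : L} (hx : x ≠ 0) (hxp : x ^ p ∈ Set.range (algebraMap K L)) :
      (g x / f x) ^ p = 1 := by
    rw [div_pow, ← map_pow, ← map_pow, ← (eq_iff _).2 hxp, div_self]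
    exact (map_ne_zero f).2 (pow_ne_zero _ hx)
  have hθ0 : θ ≠ 0 := fun h => hθ (h ▸ ⟨0, map_zero _⟩)
  have hζ : IsPrimitiveRoot (g θ / f θ) p := by
    have := Fact.mk hp
    refine IsPrimitiveRoot.iff_orderOf.2 (orderOf_eq_prime (div_pow_eq_one hθ0 hθp) fun h => hθ ?_)
    exact (eq_iff θ).1 (eq_of_div_eq_one h).symm
  have : NeZero p := ⟨hp.ne_zero⟩
  obtain ⟨j, hj, hζj⟩ := hζ.eq_pow_of_pow_eq_one (div_pow_eq_one hη hηp)
  obtain ⟨c, hc⟩ : η / θ ^ j ∈ Set.range (algebraMap K L) := by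
    rw [← eq_iff, map_div₀, map_div₀, map_pow, map_pow]
    have hfθ := (map_ne_zero f).2 hθ0
    have hgθ := (map_ne_zero g).2 hθ0
    have hfη := (map_ne_zero f).2 hη
    rw [div_pow] at hζj
    field_simp at hζj ⊢
    exact hζj
  exact ⟨j, hj, c, by rw [hc, div_mul_cancel₀ _ (pow_ne_zero _ hθ0)]⟩

end RadicalExtension

theorem span_quotients_eq_top_of_map_eq_span_singleton {A B : Type*} [CommRing A] [CommRing B]
    [IsDomain B] [Algebra A B] {J : Ideal A} {d : B} (hd : d ≠ 0)
    (hJ : J.map (algebraMap A B) = Ideal.span {d}) :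
    Ideal.span {α : B | ∃ c ∈ J, c ≠ 0 ∧ algebraMap A B c = d * α} = ⊤ := by
  set S : Set B := {α | ∃ c ∈ J, c ≠ 0 ∧ algebraMap A B c = d * α}
  have hle : J.map (algebraMap A B) ≤ Ideal.span {d} * Ideal.span S := by
    refine Ideal.map_le_iff_le_comap.2 fun c hcJ => ?_
    obtain rfl | hc0 := eq_or_ne c 0
    · exact zero_mem _
    obtain ⟨α, hα⟩ := Ideal.mem_span_singleton.1 (hJ ▸ Ideal.mem_map_of_mem _ hcJ)
    rw [Ideal.mem_comap, hα]
    exact Ideal.mul_mem_mul (Ideal.mem_span_singleton_self d)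
      (Ideal.subset_span ⟨c, hcJ, hc0, hα⟩)
  rw [hJ, Ideal.span_singleton_le_iff_mem, Ideal.mem_span_singleton_mul] at hle
  obtain ⟨z, hz, hdz⟩ := hle
  rw [Ideal.eq_top_iff_one, ← mul_left_cancel₀ hd (hdz.trans (mul_one d).symm)]
  exact hz

section Different

variable (A K L : Type*) {B : Type*} [CommRing A] [IsDomain A] [IsIntegrallyClosed A] [Field K]
  [Algebra A K] [IsFractionRing A K] [Field L] [Algebra K L] [FiniteDimensional K L]
  [Algebra.IsSeparable K L] [CommRing B] [IsDedekindDomain B] [Algebra A B] [Algebra A L]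
  [Algebra B L] [IsScalarTower A K L] [IsScalarTower A B L] [IsIntegralClosure B A L]
  [Module.IsTorsionFree A B]

theorem aeval_derivative_mem_differentIdeal_of_aeval_eq_zero {x : B}
    (hx : Algebra.adjoin K {algebraMap B L x} = ⊤) {f : A[X]} (hf : aeval x f = 0) :
    aeval x (derivative f) ∈ differentIdeal A B := by
  have hint : IsIntegral A x := IsIntegralClosure.isIntegral A L x
  obtain ⟨g, rfl⟩ := minpoly.isIntegrallyClosed_dvd hint hf
  simpa [derivative_mul, minpoly.aeval] using
    Ideal.mul_mem_right (aeval x g) _ (aeval_derivative_mem_differentIdeal A K L x hx)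

theorem natCast_mul_pow_mem_differentIdeal_of_pow_eq {n : ℕ} {θ α : B} {a c : A} {I : Ideal A}
    (hθ0 : θ ≠ 0) (hθ : Algebra.adjoin K {algebraMap B L θ} = ⊤)
    (hθa : θ ^ n = algebraMap A B a) (hI : I ^ n = Ideal.span {a}) (hcI : c ∈ I ^ (n - 1))
    (hc0 : c ≠ 0) (hc : algebraMap A B c = θ ^ (n - 1) * α) :
    n * α ^ (n - 1) ∈ differentIdeal A B := by
  obtain rfl | hn := eq_or_ne n 0
  · simp
  have hadjoin : Algebra.adjoin K {algebraMap B L α} = ⊤ := by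
    have hθα : algebraMap B L θ = (algebraMap A K a / algebraMap A K c) • algebraMap B L α := by
      have hcK : algebraMap A L c ≠ 0 := by
        simpa [IsScalarTower.algebraMap_apply A K L] using hc0
      have hcθ : algebraMap A B c * θ = algebraMap A B a * α := by
        rw [hc, ← hθa, ← pow_sub_one_mul hn θ]
        ring
      rw [Algebra.smul_def, map_div₀, ← IsScalarTower.algebraMap_apply,
        ← IsScalarTower.algebraMap_apply, div_mul_eq_mul_div, eq_div_iff hcK, mul_comm,
        IsScalarTower.algebraMap_apply A B L, IsScalarTower.algebraMap_apply A B L, ← map_mul,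
        ← map_mul, hcθ]
    refine top_unique (hθ ▸ Algebra.adjoin_le (Set.singleton_subset_iff.2 ?_))
    exact hθα ▸ Subalgebra.smul_mem _ (Algebra.self_mem_adjoin_singleton K _) _
  obtain ⟨b, hb⟩ : a ^ (n - 1) ∣ c ^ n := by
    rw [← Ideal.mem_span_singleton, ← Ideal.span_singleton_pow, ← hI, pow_right_comm]
    exact Ideal.pow_mem_pow hcI n
  have hα : α ^ n = algebraMap A B b := by
    refine mul_left_cancel₀ (pow_ne_zero n (pow_ne_zero (n - 1) hθ0)) ?_
    rw [← mul_pow, ← hc, ← map_pow, hb, map_mul, map_pow, ← hθa, pow_right_comm]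
  have hroot : aeval α (X ^ n - C b) = 0 := by simp [hα]
  have hderiv : aeval α (derivative (X ^ n - C b)) = n * α ^ (n - 1) := by
    simp [derivative_X_pow]
  exact hderiv ▸ aeval_derivative_mem_differentIdeal_of_aeval_eq_zero A K L hadjoin hroot

theorem natCast_mem_differentIdeal_of_pow_eq {n : ℕ} {θ : B} {a : A} {I : Ideal A} (hθ0 : θ ≠ 0)
    (hθ : Algebra.adjoin K {algebraMap B L θ} = ⊤) (hθa : θ ^ n = algebraMap A B a)
    (hI : I ^ n = Ideal.span {a}) : (n : B) ∈ differentIdeal A B := by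
  obtain rfl | hn := eq_or_ne n 0
  · simp
  -- `I` becomes principal in `B`, so the `α` of the previous lemma generate the unit ideal.
  have hmap : I.map (algebraMap A B) = Ideal.span {θ} := by
    refine IsMulTorsionFree.pow_left_injective hn ?_
    simp only [← Ideal.map_pow, hI, Ideal.map_span, Set.image_singleton, Ideal.span_singleton_pow,
      hθa]
  have hmap' : (I ^ (n - 1)).map (algebraMap A B) = Ideal.span {θ ^ (n - 1)} := by
    rw [Ideal.map_pow, hmap, Ideal.span_singleton_pow]
  have hspan := Ideal.span_pow_eq_top _
    (span_quotients_eq_top_of_map_eq_span_singleton (pow_ne_zero _ hθ0) hmap') (n - 1)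
  have hle : (⊤ : Ideal B) ≤
      Submodule.comap (LinearMap.mulLeft B (n : B)) (differentIdeal A B) := by
    rw [← hspan, Ideal.span, Submodule.span_le]
    rintro _ ⟨α, ⟨c, hcI, hc0, hc⟩, rfl⟩
    exact natCast_mul_pow_mem_differentIdeal_of_pow_eq A K L hθ0 hθ hθa hI hcI hc0 hc
  simpa using hle (Submodule.mem_top (x := 1))

end Different

theorem exists_natAbs_discr_eq_mul_natAbs_discr_pow (K L : Type*) [Field K] [NumberField K]
    [Field L] [NumberField L] [Algebra K L] {k : ℕ} (hk : 0 < k)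
    (hmem : (k : 𝓞 L) ∈ differentIdeal (𝓞 K) (𝓞 L)) :
    ∃ m ∈ Finset.Icc 1 (k ^ Module.finrank ℚ L),
      (discr L).natAbs = m * (discr K).natAbs ^ Module.finrank K L := by
  have hdvd : Ideal.absNorm (differentIdeal (𝓞 K) (𝓞 L)) ∣ k ^ Module.finrank ℚ L := by
    rw [← RingOfIntegers.rank, ← Ideal.absNorm_span_natCast]
    exact Ideal.absNorm_dvd_absNorm_of_le ((Ideal.span_singleton_le_iff_mem _).2 hmem)
  exact ⟨_, Finset.mem_Icc.2 ⟨Nat.pos_of_dvd_of_pos hdvd (by positivity),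
    Nat.le_of_dvd (by positivity) hdvd⟩,
    natAbs_discr_eq_absNorm_differentIdeal_mul_natAbs_discr_pow K (𝓞 K) L (𝓞 L)⟩

/-- The elements `a` generating the `m`-th power of an integral ideal in the class `x`, called
virtual `m`-units by Cohen. They turn an `m`-torsion class into a radicand; requiring `I` to be
integral is no restriction on `x`, and keeps `a` in `R`. -/
def IsVirtualUnit {R : Type*} [CommRing R] [IsDedekindDomain R] (m : ℕ) (x : ClassGroup R)
    (a : R) : Prop :=
  ∃ I : (Ideal R)⁰, ClassGroup.mk0 I = x ∧ (I : Ideal R) ^ m = Ideal.span {a}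

namespace IsVirtualUnit

variable {R : Type*} [CommRing R] [IsDedekindDomain R] {m : ℕ} {x y : ClassGroup R} {a b u : R}

theorem exists_of_pow_eq_one (hx : x ^ m = 1) : ∃ a, IsVirtualUnit m x a := by
  obtain ⟨I, rfl⟩ := ClassGroup.mk0_surjective x
  rw [← map_pow] at hx
  obtain ⟨a, ha⟩ := (ClassGroup.mk0_eq_one_iff (I ^ m).2).1 hx
  exact ⟨a, I, rfl, ha⟩

theorem ne_zero (h : IsVirtualUnit m x a) : a ≠ 0 := by
  rintro rfl
  obtain ⟨I, -, hI⟩ := h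
  exact nonZeroDivisors.coe_ne_zero (I ^ m) (by simpa using hI)

theorem pow (h : IsVirtualUnit m x a) (j : ℕ) : IsVirtualUnit m (x ^ j) (a ^ j) := by
  obtain ⟨I, rfl, hI⟩ := h
  refine ⟨I ^ j, map_pow _ _ _, ?_⟩
  rw [SubmonoidClass.coe_pow, pow_right_comm, hI, Ideal.span_singleton_pow]

theorem pow_mul (h : IsVirtualUnit m x a) (hu : u ≠ 0) : IsVirtualUnit m x (u ^ m * a) := by
  obtain ⟨I, rfl, hI⟩ := h
  have hu' : Ideal.span {u} ∈ (Ideal R)⁰ :=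
    mem_nonZeroDivisors_of_ne_zero (by simpa using hu)
  refine ⟨⟨_, hu'⟩ * I, ?_, ?_⟩
  · rw [map_mul, (ClassGroup.mk0_eq_one_iff hu').2 ⟨u, rfl⟩, one_mul]
  · simp [mul_pow, hI, Ideal.span_singleton_pow, Ideal.span_singleton_mul_span_singleton]

theorem unique (hm : m ≠ 0) (hx : IsVirtualUnit m x a) (hy : IsVirtualUnit m y a) : x = y := by
  obtain ⟨I, rfl, hI⟩ := hx
  obtain ⟨J, rfl, hJ⟩ := hy
  rw [Subtype.ext (IsMulTorsionFree.pow_left_injective hm (hI.trans hJ.symm))]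

variable {K : Type*} [Field K] [Algebra R K] [IsFractionRing R K]

theorem eq_pow_of_algebraMap_eq (hm : m ≠ 0) (hx : IsVirtualUnit m x a) (hy : IsVirtualUnit m y b)
    {c : K} {j : ℕ} (h : algebraMap R K b = c ^ m * algebraMap R K a ^ j) : y = x ^ j := by
  obtain ⟨u, v, hv, rfl⟩ := IsFractionRing.div_surjective (A := R) c
  have hv0 : v ≠ 0 := nonZeroDivisors.ne_zero hv
  have hvK : algebraMap R K v ≠ 0 := by simpa using hv0
  have heq : v ^ m * b = u ^ m * a ^ j := by
    apply FaithfulSMul.algebraMap_injective R K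
    simp only [map_mul, map_pow, h, div_pow]
    field_simp
  have hu0 : u ≠ 0 := by
    rintro rfl
    rw [zero_pow hm, zero_mul] at heq
    exact mul_ne_zero (pow_ne_zero _ hv0) hy.ne_zero heq
  exact unique hm (hy.pow_mul hv0) (heq ▸ (hx.pow j).pow_mul hu0)

theorem pow_ne_algebraMap (hm : m ≠ 0) (hx : IsVirtualUnit m x a) (hx1 : x ≠ 1) (c : K) :
    c ^ m ≠ algebraMap R K a := fun hc =>
  hx1 (by simpa using hx.eq_pow_of_algebraMap_eq hm hx (c := c) (j := 0) (by simp [hc]))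

end IsVirtualUnit

section ClassRadical

variable {K L : Type*} [Field K] [NumberField K] [Field L] [Algebra K L] {m ℓ : ℕ}
  {x y : ClassGroup (𝓞 K)} {θ η : L}

/-- `θ` is an `m`-th root of a virtual `m`-unit in the class `x`, so that `K(θ)` is a field attached
to `x`. The ambient field `L` is arbitrary: it is `K(θ)` itself in the ramification arguments and an
algebraic closure when fields are counted. -/
def IsClassRadical (m : ℕ) (x : ClassGroup (𝓞 K)) (θ : L) : Prop :=
  ∃ a : 𝓞 K, IsVirtualUnit m x a ∧ θ ^ m = algebraMap K L a

namespace IsClassRadical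

theorem exists_of_pow_eq_one [IsAlgClosed L] (hm : 0 < m) (hx : x ^ m = 1) :
    ∃ θ : L, IsClassRadical m x θ := by
  obtain ⟨a, ha⟩ := IsVirtualUnit.exists_of_pow_eq_one hx
  obtain ⟨θ, hθ⟩ := IsAlgClosed.exists_pow_nat_eq (algebraMap K L a) hm
  exact ⟨θ, a, ha, hθ⟩

theorem of_coe {F : IntermediateField K L} {θ : F} (h : IsClassRadical m x (θ : L)) :
    IsClassRadical m x θ := by
  obtain ⟨a, ha, hθ⟩ := h
  exact ⟨a, ha, Subtype.ext hθ⟩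

theorem ne_zero (hm : m ≠ 0) (h : IsClassRadical m x θ) : θ ≠ 0 := by
  obtain ⟨a, ha, hθ⟩ := h
  rintro rfl
  rw [zero_pow hm, eq_comm, map_eq_zero, RingOfIntegers.coe_eq_zero_iff] at hθ
  exact ha.ne_zero hθ

theorem notMem_range_algebraMap (hm : m ≠ 0) (h : IsClassRadical m x θ) (hx : x ≠ 1) :
    θ ∉ Set.range (algebraMap K L) := by
  obtain ⟨a, ha, hθ⟩ := h
  rintro ⟨c, rfl⟩
  exact ha.pow_ne_algebraMap hm hx c ((algebraMap K L).injective (by rw [map_pow, hθ]))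

theorem finrank_adjoin_simple (hℓ : ℓ.Prime) (h : IsClassRadical ℓ x θ) (hx : x ≠ 1) :
    Module.finrank K K⟮θ⟯ = ℓ := by
  obtain ⟨a, ha, hθ⟩ := h
  exact finrank_adjoin_simple_of_pow_eq_algebraMap hℓ (ha.pow_ne_algebraMap hℓ.ne_zero hx) hθ

theorem exists_pow_eq_of_finrank_prime (hℓ : ℓ.Prime) (hKL : Module.finrank K L = ℓ)
    (hθ : IsClassRadical ℓ x θ) (hx : x ≠ 1) (hη : IsClassRadical ℓ y η) :
    ∃ j < ℓ, x ^ j = y := by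
  have : FiniteDimensional K L := Module.finite_of_finrank_pos (hKL ▸ hℓ.pos)
  have hθK := hθ.notMem_range_algebraMap hℓ.ne_zero hx
  have hη0 := hη.ne_zero hℓ.ne_zero
  obtain ⟨a, ha, hθa⟩ := hθ
  obtain ⟨b, hb, hηb⟩ := hη
  obtain ⟨j, hj, c, rfl⟩ := exists_eq_algebraMap_mul_pow_of_finrank_prime hℓ hKL hθK ⟨_, hθa.symm⟩
    hη0 ⟨_, hηb.symm⟩
  have hbc : algebraMap (𝓞 K) K b = c ^ ℓ * algebraMap (𝓞 K) K a ^ j := by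
    refine (algebraMap K L).injective ?_
    rw [← hηb, mul_pow, pow_right_comm, hθa, map_mul, map_pow, map_pow]
  exact ⟨j, hj, (ha.eq_pow_of_algebraMap_eq hℓ.ne_zero hb hbc).symm⟩

theorem exists_pow_eq_of_mem_adjoin_simple (hℓ : ℓ.Prime) (hθ : IsClassRadical ℓ x θ) (hx : x ≠ 1)
    (hη : IsClassRadical ℓ y η) (hmem : η ∈ K⟮θ⟯) : ∃ j < ℓ, x ^ j = y :=
  exists_pow_eq_of_finrank_prime hℓ (hθ.finrank_adjoin_simple hℓ hx)
    (of_coe (θ := AdjoinSimple.gen K θ) hθ) hx (of_coe (θ := ⟨η, hmem⟩) hη)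

theorem natCast_mem_differentIdeal [NumberField L] (hℓ : ℓ.Prime) (hKL : Module.finrank K L = ℓ)
    (h : IsClassRadical ℓ x θ) (hx : x ≠ 1) : (ℓ : 𝓞 L) ∈ differentIdeal (𝓞 K) (𝓞 L) := by
  have hθ0 := h.ne_zero hℓ.ne_zero
  have hadjoin : Algebra.adjoin K {θ} = ⊤ := by
    have := Subalgebra.isSimpleOrder_of_finrank_prime K L (hKL ▸ hℓ)
    refine (eq_bot_or_eq_top _).resolve_left fun hbot => ?_
    exact h.notMem_range_algebraMap hℓ.ne_zero hx
      (Algebra.mem_bot.1 (hbot ▸ Algebra.self_mem_adjoin_singleton K θ))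
  obtain ⟨a, ⟨I, -, hI⟩, hθ⟩ := h
  have hint : IsIntegral ℤ θ :=
    .of_pow hℓ.pos (hθ ▸ a.isIntegral_coe.map (algebraMap K L).toIntAlgHom)
  exact natCast_mem_differentIdeal_of_pow_eq (𝓞 K) K L (θ := ⟨θ, hint⟩)
    (fun h0 => hθ0 (congrArg Subtype.val h0)) hadjoin (RingOfIntegers.ext hθ) hI

end IsClassRadical

end ClassRadical

theorem absDisc_eq_natAbs_discr (K : IntermediateField ℚ (AlgebraicClosure ℚ)) [NumberField K] :
    absDisc K = (discr K).natAbs :=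
  dif_pos NumberField.to_finiteDimensional

/-- The degree-`d` fields of absolute discriminant `D`, as subfields of a fixed `ℚ̄`. By the junk
values of `finrank` and `absDisc`, `d = D = 0` gives the infinite extensions of `ℚ`. -/
def fieldsWithDegreeAndDisc (d D : ℕ) : Set (IntermediateField ℚ (AlgebraicClosure ℚ)) :=
  {L | Module.finrank ℚ L = d ∧ absDisc L = D}

theorem finite_fieldsWithDegreeAndDisc {d : ℕ} (hd : 0 < d) (D : ℕ) :
    (fieldsWithDegreeAndDisc d D).Finite := by
  refine ((finite_of_discr_bdd (AlgebraicClosure ℚ) D).image Subtype.val).subset ?_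
  rintro L ⟨hLd, hLD⟩
  have hfin : FiniteDimensional ℚ L := Module.finite_of_finrank_pos (hLd ▸ hd)
  have : NumberField L := ⟨⟩
  refine ⟨⟨L, hfin⟩, ?_, rfl⟩
  change |discr L| ≤ D
  rw [← hLD, absDisc_eq_natAbs_discr, Int.natCast_natAbs]

theorem card_le_mul_card_image_of_forall_exists_pow_eq {M α : Type*} [Monoid M] [DecidableEq α]
    {s : Finset M} {f : M → α} {k : ℕ}
    (h : ∀ x ∈ s, ∀ y ∈ s, f y = f x → ∃ j < k, x ^ j = y) : s.card ≤ k * (s.image f).card := by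
  classical
  refine Finset.card_le_mul_card_image s k fun b hb => ?_
  obtain ⟨x, hx, rfl⟩ := Finset.mem_image.1 hb
  have hsub : s.filter (f · = f x) ⊆ (Finset.range k).image (x ^ ·) := fun y hy => by
    obtain ⟨hys, hyx⟩ := Finset.mem_filter.1 hy
    simpa using h x hx y hys hyx
  exact (Finset.card_le_card hsub).trans (Finset.card_image_le.trans_eq (Finset.card_range k))

section Counting

variable {K : IntermediateField ℚ (AlgebraicClosure ℚ)} [NumberField K] {ℓ : ℕ}

theorem IsClassRadical.exists_mem_fieldsWithDegreeAndDisc {x : ClassGroup (𝓞 K)}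
    {θ : AlgebraicClosure ℚ} (hℓ : ℓ.Prime) (h : IsClassRadical ℓ x θ) (hx : x ≠ 1) :
    ∃ m ∈ Finset.Icc 1 (ℓ ^ (Module.finrank ℚ K * ℓ)),
      restrictScalars ℚ K⟮θ⟯ ∈
        fieldsWithDegreeAndDisc (Module.finrank ℚ K * ℓ) (m * absDisc K ^ ℓ) := by
  have hKL := h.finrank_adjoin_simple hℓ hx
  have hdeg : Module.finrank ℚ K⟮θ⟯ = Module.finrank ℚ K * ℓ := by
    rw [← Module.finrank_mul_finrank ℚ K K⟮θ⟯, hKL]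
  have hfin : FiniteDimensional K K⟮θ⟯ := Module.finite_of_finrank_pos (hKL ▸ hℓ.pos)
  have : FiniteDimensional ℚ K⟮θ⟯ := Module.Finite.trans K K⟮θ⟯
  have : NumberField K⟮θ⟯ := ⟨⟩
  have : NumberField (restrictScalars ℚ K⟮θ⟯) := ‹NumberField K⟮θ⟯›
  have hdiff := (of_coe (θ := AdjoinSimple.gen K θ) h).natCast_mem_differentIdeal hℓ hKL hx
  obtain ⟨m, hm, hdisc⟩ := exists_natAbs_discr_eq_mul_natAbs_discr_pow K K⟮θ⟯ hℓ.pos hdiff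
  rw [hdeg] at hm
  rw [hKL, ← absDisc_eq_natAbs_discr K] at hdisc
  exact ⟨m, hm, hdeg, (absDisc_eq_natAbs_discr _).trans hdisc⟩

theorem clTors_le_one_add_mul_sum_ncard (hℓ : ℓ.Prime) :
    clTors K ℓ ≤ 1 + ℓ * ∑ m ∈ Finset.Icc 1 (ℓ ^ (Module.finrank ℚ K * ℓ)),
      (fieldsWithDegreeAndDisc (Module.finrank ℚ K * ℓ) (m * absDisc K ^ ℓ)).ncard := by
  classical
  have hdeg : 0 < Module.finrank ℚ K * ℓ := Nat.mul_pos Module.finrank_pos hℓ.pos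
  choose! θ hθ using fun (x : ClassGroup (𝓞 K)) (hx : x ^ ℓ = 1) =>
    IsClassRadical.exists_of_pow_eq_one (L := AlgebraicClosure ℚ) hℓ.pos hx
  let T : Finset (ClassGroup (𝓞 K)) := {x | x ^ ℓ = 1}
  have hT {x : ClassGroup (𝓞 K)} (hx : x ∈ T.erase 1) : x ≠ 1 ∧ IsClassRadical ℓ x (θ x) :=
    ⟨Finset.ne_of_mem_erase hx, hθ x (Finset.mem_filter.1 (Finset.mem_of_mem_erase hx)).2⟩
  let F (x : ClassGroup (𝓞 K)) := restrictScalars ℚ K⟮θ x⟯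
  let U (m : ℕ) := (finite_fieldsWithDegreeAndDisc hdeg (m * absDisc K ^ ℓ)).toFinset
  have hmaps : ∀ x ∈ T.erase 1,
      F x ∈ (Finset.Icc 1 (ℓ ^ (Module.finrank ℚ K * ℓ))).biUnion U := fun x hx => by
    obtain ⟨hx1, hθx⟩ := hT hx
    simpa [F, U] using hθx.exists_mem_fieldsWithDegreeAndDisc hℓ hx1
  have hfiber : ∀ x ∈ T.erase 1, ∀ y ∈ T.erase 1, F y = F x → ∃ j < ℓ, x ^ j = y := by
    intro x hx y hy hyx
    have hmem : θ y ∈ F x := hyx ▸ mem_adjoin_simple_self K (θ y)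
    exact (hT hx).2.exists_pow_eq_of_mem_adjoin_simple hℓ (hT hx).1 (hT hy).2 hmem
  calc clTors K ℓ = T.card := by rw [clTors, Nat.card_eq_fintype_card, Fintype.card_subtype]
    _ ≤ 1 + (T.erase 1).card := by
      rw [add_comm, Finset.card_erase_add_one (by simp [T])]
    _ ≤ 1 + ℓ * ((T.erase 1).image F).card := by
      gcongr
      exact card_le_mul_card_image_of_forall_exists_pow_eq hfiber
    _ ≤ 1 + ℓ * ∑ m ∈ Finset.Icc 1 (ℓ ^ (Module.finrank ℚ K * ℓ)), (U m).card := by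
      gcongr
      exact (Finset.card_le_card (Finset.image_subset_iff.2 hmaps)).trans Finset.card_biUnion_le
    _ = _ := by simp only [U, ← Set.ncard_eq_toFinset_card]

end Counting

theorem mul_pow_rpow_div {a b : ℝ} (ha : 0 ≤ a) (hb : 0 ≤ b) {n : ℕ} (hn : n ≠ 0) (s : ℝ) :
    (a * b ^ n) ^ (s / n) = a ^ (s / n) * b ^ s := by
  rw [Real.mul_rpow ha (pow_nonneg hb n), ← Real.rpow_natCast_mul hb,
    mul_div_cancel₀ _ (Nat.cast_ne_zero.2 hn)]

/-- If the discriminant multiplicity conjecture holds in degree `nℓ`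
(at most `≪_ε D^ε` degree-`nℓ` fields of discriminant `D`), then the `ℓ`-torsion
conjecture holds in degree `n`: `|Cl_K[ℓ]| ≪_ε D_K^ε`. -/
theorem discMultiplicityConjecture_implies_ellTorsionConjecture
    (n : ℕ) (hn : 2 ≤ n) (ℓ : ℕ) (hℓ : ℓ.Prime)
    (hD : ∀ ε : ℝ, 0 < ε → ∃ C : ℝ, ∀ D : ℕ, 1 ≤ D →
      (({L : IntermediateField ℚ (AlgebraicClosure ℚ) |
          Module.finrank ℚ L = n * ℓ ∧ absDisc L = D}).ncard : ℝ)
        ≤ C * (D : ℝ) ^ ε) :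
    ∀ ε : ℝ, 0 < ε → ∃ C' : ℝ,
      ∀ K : IntermediateField ℚ (AlgebraicClosure ℚ), Module.finrank ℚ K = n →
        (clTors K ℓ : ℝ) ≤ C' * (absDisc K : ℝ) ^ ε := by
  intro ε hε
  obtain ⟨C, hC⟩ := hD (ε / ℓ) (div_pos hε (Nat.cast_pos.2 hℓ.pos))
  refine ⟨1 + ℓ * ∑ m ∈ Finset.Icc 1 (ℓ ^ (n * ℓ)), C * (m : ℝ) ^ (ε / ℓ), fun K hK => ?_⟩
  have : FiniteDimensional ℚ K := Module.finite_of_finrank_pos (by omega)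
  have : NumberField K := ⟨⟩
  have hDK : 1 ≤ absDisc K := absDisc_eq_natAbs_discr K ▸ Int.natAbs_pos.2 (discr_ne_zero K)
  have hcount (m : ℕ) (hm : m ∈ Finset.Icc 1 (ℓ ^ (n * ℓ))) :
      ((fieldsWithDegreeAndDisc (n * ℓ) (m * absDisc K ^ ℓ)).ncard : ℝ) ≤
        C * (m : ℝ) ^ (ε / ℓ) * (absDisc K : ℝ) ^ ε := by
    refine (hC _ (Nat.mul_pos (Finset.mem_Icc.1 hm).1 (Nat.pow_pos hDK))).trans_eq ?_
    rw [Nat.cast_mul, Nat.cast_pow, mul_assoc,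
      mul_pow_rpow_div m.cast_nonneg (absDisc K).cast_nonneg hℓ.ne_zero]
  calc (clTors K ℓ : ℝ)
      ≤ 1 + ℓ * ∑ m ∈ Finset.Icc 1 (ℓ ^ (n * ℓ)),
          ((fieldsWithDegreeAndDisc (n * ℓ) (m * absDisc K ^ ℓ)).ncard : ℝ) :=
        mod_cast hK ▸ clTors_le_one_add_mul_sum_ncard (K := K) hℓ
    _ ≤ (absDisc K : ℝ) ^ ε + ℓ * ∑ m ∈ Finset.Icc 1 (ℓ ^ (n * ℓ)),
          C * (m : ℝ) ^ (ε / ℓ) * (absDisc K : ℝ) ^ ε := by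
        gcongr with m hm
        · exact Real.one_le_rpow (mod_cast hDK) hε.le
        · exact hcount m hm
    _ = _ := by rw [← Finset.sum_mul]; ring
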